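/- Let n ≥ 2, let E ⊂ ℝⁿ be a non-empty Borel set, and let A ⊂ ℝⁿ be a Borel set such that for every p ∈ E the intersection L(p) ∩ A has positive (n−1)-dimensional measure (i.e. 𝓗^{n−1}(L(p) ∩ A) > 0). Then dim_H (L(E) ∩ A) = dim_H L(E) = min{dim_H E + n − 1, n}. -/

import Mathlib

open MeasureTheory RealInnerProductSpace

/-- The non-vertical hyperplane `L(a,b) = {(x,y) : y = a·x + b}` in `ℝⁿ = ℝ^{n−1} × ℝ`
associated to the point `p = (a,b)`. -/
def hyperplane {n : ℕ} (p : EuclideanSpace ℝ (Fin (n - 1)) × ℝ) :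
    Set (EuclideanSpace ℝ (Fin (n - 1)) × ℝ) :=
  {q | q.2 = ⟪p.1, q.1⟫ + p.2}

/-- `L(E) = ⋃_{p ∈ E} L(p)`, the union of the hyperplanes parametrized by `E`. -/
def hyperplaneUnion {n : ℕ} (E : Set (EuclideanSpace ℝ (Fin (n - 1)) × ℝ)) :
    Set (EuclideanSpace ℝ (Fin (n - 1)) × ℝ) :=
  ⋃ p ∈ E, hyperplane p

/-!
The upper bound holds because the union is the image of `ℝⁿ⁻¹ × E` under the smooth map
`(x, p) ↦ (x, ⟪p.1, x⟫ + p.2)`.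

For the lower bound let `t < min (dimH E) 1`. Frostman's lemma puts on `E` a probability measure
`μ` with `μ U ≤ C * diam U ^ s` for some `s > t`. Above a point `x` two hyperplanes `L(p)` and
`L(p')` lie at height difference `|⟪a - a', x⟫ + b - b'|`, and since a slab has measure comparable
to its width, this difference is less than `δ * ‖p - p'‖` only for a set of `x` in a fixed ball of
measure `O(δ)`. As `t < 1`, the `t`-energy of `μ` seen on the vertical line above `x` is therefore
finite for almost every `x`, so that the image of `μ.prod volume`, restricted to a set of positive
measure where `(x, p)` is mapped into `A` and the potential is bounded, satisfies the Frostman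
condition with exponent `t + n - 1`, and the mass distribution principle applies.

For analytic sets Frostman's lemma follows by way of net measures: the increasing sets lemma for
the net content gives a compact subset of positive content, and splitting mass proportionally to
net contents along the tree of dyadic cubes gives the measure.
-/

section

open Set Filter Topology ENNReal NNReal Module Metric

section DyadicScales

lemma exists_two_inv_pow_lt_le {u : ℝ≥0∞} (hu₀ : u ≠ 0) (hu₁ : u ≤ 1) :
    ∃ k : ℕ, 2⁻¹ ^ (k + 1) < u ∧ u ≤ 2⁻¹ ^ k := by
  lift u to ℝ≥0 using ne_top_of_le_ne_top one_ne_top hu₁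
  have htwo : (2⁻¹ : ℝ≥0∞) = ((2⁻¹ : ℝ≥0) : ℝ≥0∞) := by simp [ENNReal.coe_inv]
  simp only [htwo]
  exact_mod_cast exists_nat_pow_near_of_lt_one (y := (2⁻¹ : ℝ≥0))
    (pos_iff_ne_zero.2 (by exact_mod_cast hu₀)) (by exact_mod_cast hu₁) (by positivity)
    two_inv_lt_one

lemma tendsto_two_inv_pow_rpow {s : ℝ} (hs : 0 < s) :
    Tendsto (fun k : ℕ => ((2⁻¹ : ℝ≥0∞) ^ k) ^ s) atTop (𝓝 0) := by
  simpa [ENNReal.zero_rpow_of_pos hs] using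
    (ENNReal.tendsto_pow_atTop_nhds_zero_of_lt_one ENNReal.one_half_lt_one).ennrpow_const s

lemma le_mul_rpow_of_forall_two_inv_pow {a C e : ℝ≥0∞} {s : ℝ} (hC : C ≠ ⊤) (hs : 0 < s)
    (he : e ≤ 1) (h : ∀ k : ℕ, e ≤ 2⁻¹ ^ k → a ≤ C * (2⁻¹ ^ k) ^ s) : a ≤ C * 2 ^ s * e ^ s := by
  obtain rfl | he₀ := eq_or_ne e 0
  · have hlim := ENNReal.Tendsto.const_mul (tendsto_two_inv_pow_rpow hs) (.inr hC)
    exact (ge_of_tendsto' hlim fun k => h k zero_le).trans (by simp)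
  obtain ⟨k, hk, hek⟩ := exists_two_inv_pow_lt_le he₀ he
  calc a ≤ C * (2⁻¹ ^ k) ^ s := h k hek
    _ = C * (2 * 2⁻¹ ^ (k + 1)) ^ s := by
        rw [pow_succ', ← mul_assoc, ENNReal.mul_inv_cancel two_ne_zero ofNat_ne_top, one_mul]
    _ ≤ C * (2 * e) ^ s := by gcongr
    _ = C * 2 ^ s * e ^ s := by rw [ENNReal.mul_rpow_of_nonneg _ _ hs.le, mul_assoc]

end DyadicScales

section Frostman

lemma outerMeasure_eq_zero_of_hausdorffMeasure_eq_zero {X : Type*} [EMetricSpace X]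
    [MeasurableSpace X] [BorelSpace X] {φ : OuterMeasure X} {s : ℝ} {C : ℝ≥0∞} (hC : C ≠ ⊤)
    (hφ : ∀ U, ediam U ≤ 1 → φ U ≤ C * ediam U ^ s) {E : Set X} (hE : μH[s] E = 0) :
    φ E = 0 := by
  have hle : φ ≤ (C + 1) • OuterMeasure.mkMetric fun r => r ^ s := by
    rw [← OuterMeasure.mkMetric_smul _ (by finiteness) (by positivity)]
    exact OuterMeasure.le_mkMetric _ _ 1 one_pos fun U hU =>
      (hφ U hU).trans (mul_le_mul_left le_self_add _)
  rw [Measure.hausdorffMeasure, ← OuterMeasure.coe_mkMetric] at hE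
  exact le_zero_iff.1 ((hle E).trans (by simp [hE]))

/-- Frostman's growth condition of exponent `s`: the mass of a set is at most a constant times the
`s`-th power of its diameter. Sets of infinite diameter are exempt because `⊤ ^ 0 = 1`. -/
def IsFrostman {X : Type*} [PseudoEMetricSpace X] [MeasurableSpace X] (μ : Measure X) (s : ℝ) :
    Prop :=
  ∃ C : ℝ≥0∞, C ≠ ⊤ ∧ ∀ U : Set X, ediam U ≠ ⊤ → μ U ≤ C * ediam U ^ s

lemma isFrostman_of_forall_two_inv_pow {X : Type*} [PseudoEMetricSpace X] [MeasurableSpace X]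
    {μ : Measure X} [IsFiniteMeasure μ] {s : ℝ} (hs : 0 < s) {C : ℝ≥0∞} (hC : C ≠ ⊤)
    (h : ∀ (k : ℕ) (U : Set X), ediam U ≤ 2⁻¹ ^ k → μ U ≤ C * (2⁻¹ ^ k) ^ s) :
    IsFrostman μ s := by
  refine ⟨C * 2 ^ s + μ univ, by finiteness, fun U _ => ?_⟩
  rw [add_mul]
  obtain hU | hU := le_total (ediam U) 1
  · exact (le_mul_rpow_of_forall_two_inv_pow hC hs hU fun k => h k U).trans le_self_add
  · exact ((measure_mono (subset_univ U)).trans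
      (le_mul_of_one_le_right' (ENNReal.one_le_rpow hU hs))).trans le_add_self

/-- The mass distribution principle. -/
lemma IsFrostman.hausdorffMeasure_ne_zero {X : Type*} [EMetricSpace X] [MeasurableSpace X]
    [BorelSpace X] {μ : Measure X} {s : ℝ} (hμ : IsFrostman μ s) {Z : Set X} (hZ : μ Z ≠ 0) :
    μH[s] Z ≠ 0 := by
  obtain ⟨C, hC, hμC⟩ := hμ
  exact fun h₀ => hZ <| outerMeasure_eq_zero_of_hausdorffMeasure_eq_zero (φ := μ.toOuterMeasure) hC
    (fun U hU => hμC U (ne_top_of_le_ne_top one_ne_top hU)) h₀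

lemma IsFrostman.map {X Y : Type*} [PseudoEMetricSpace X] [MeasurableSpace X]
    [PseudoEMetricSpace Y] [MeasurableSpace Y] [BorelSpace Y] {μ : Measure X} {s : ℝ}
    (hμ : IsFrostman μ s) (hs : 0 ≤ s) {f : X → Y} (hf : Measurable f) {K : ℝ≥0}
    (hfK : AntilipschitzWith K f) : IsFrostman (μ.map f) s := by
  obtain ⟨C, hC, hμC⟩ := hμ
  refine ⟨C * K ^ s, by finiteness, fun U hU => ?_⟩
  have hpre : ediam (f ⁻¹' closure U) ≤ K * ediam U := by
    simpa only [ediam_closure] using hfK.ediam_preimage_le (closure U)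
  calc μ.map f U ≤ μ.map f (closure U) := measure_mono subset_closure
    _ = μ (f ⁻¹' closure U) := Measure.map_apply hf measurableSet_closure
    _ ≤ C * ediam (f ⁻¹' closure U) ^ s := hμC _ (ne_top_of_le_ne_top (by finiteness) hpre)
    _ ≤ C * (K * ediam U) ^ s := by gcongr
    _ = C * K ^ s * ediam U ^ s := by rw [ENNReal.mul_rpow_of_nonneg _ _ hs, mul_assoc]

lemma isFrostman_addHaar {V : Type*} [NormedAddCommGroup V] [NormedSpace ℝ V]
    [FiniteDimensional ℝ V] [MeasurableSpace V] [BorelSpace V] (L : Measure V)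
    [L.IsAddHaarMeasure] : IsFrostman L (finrank ℝ V) := by
  refine ⟨L (ball 0 1), measure_ball_lt_top.ne, fun U hU => ?_⟩
  obtain rfl | ⟨x, hx⟩ := U.eq_empty_or_nonempty
  · simp
  have hsub : U ⊆ closedBall x (ediam U).toReal := fun y hy => by
    rw [mem_closedBall, ← ENNReal.ofReal_le_ofReal_iff toReal_nonneg, ← edist_dist,
      ENNReal.ofReal_toReal hU]
    exact edist_le_ediam_of_mem hy hx
  calc L U ≤ L (closedBall x (ediam U).toReal) := measure_mono hsub
    _ = L (ball 0 1) * ediam U ^ (finrank ℝ V : ℝ) := by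
        rw [L.addHaar_closedBall x toReal_nonneg, ENNReal.ofReal_pow toReal_nonneg,
          ENNReal.ofReal_toReal hU, ENNReal.rpow_natCast, mul_comm]

end Frostman

section NetContent

variable {X ι : Type*}

/-- The points lying in one of the cells named by `P`, where the word `(k, c)` names the cell
`code k ⁻¹' {c}` of generation `k`. -/
def cells (code : ℕ → X → ι) (P : Set (ℕ × ι)) : Set X :=
  {x | ∃ k, (k, code k x) ∈ P}

/-- The words of `P` that have no proper ancestor in `P`, i.e. that name cells not contained in an
older cell named by `P`. -/
def topWords (code : ℕ → X → ι) (P : Set (ℕ × ι)) : Set (ℕ × ι) :=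
  {v ∈ P | ¬ ∃ u ∈ P, u.1 < v.1 ∧ ∃ x, code u.1 x = u.2 ∧ code v.1 x = v.2}

/-- The cells of each generation refine those of the earlier generations. -/
def IsNested (code : ℕ → X → ι) : Prop :=
  ∀ ⦃j k x y⦄, j ≤ k → code k x = code k y → code j x = code j y

/-- Counting measure on words, a word of generation `k` being given the weight `w k`. -/
noncomputable def wordWeight [MeasurableSpace ι] (w : ℕ → ℝ≥0∞) : Measure (ℕ × ι) :=
  Measure.count.withDensity fun v => w v.1

variable {code : ℕ → X → ι} {w : ℕ → ℝ≥0∞} {P Q : Set (ℕ × ι)} {S : Set X}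

lemma cells_mono (h : P ⊆ Q) : cells code P ⊆ cells code Q :=
  fun _ ⟨k, hk⟩ => ⟨k, h hk⟩

lemma cells_iUnion {β : Type*} (P : β → Set (ℕ × ι)) :
    cells code (⋃ b, P b) = ⋃ b, cells code (P b) := by
  ext x
  simp only [cells, mem_iUnion, mem_ofPred_eq]
  exact exists_comm

lemma topWords_subset : topWords code P ⊆ P := sep_subset _ _

lemma subset_cells_topWords (hcode : IsNested code) (hP : S ⊆ cells code P) :
    S ⊆ cells code (topWords code P) := by
  classical
  intro x hx
  have hex := hP hx
  refine ⟨Nat.find hex, Nat.find_spec hex, ?_⟩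
  rintro ⟨⟨j, c⟩, hc, hj, y, hy, hy'⟩
  obtain rfl : code j y = c := hy
  exact Nat.find_min hex hj (hcode hj.le hy' ▸ hc)

lemma topWords_iUnion_inter_subset {β : Type*} (P : β → Set (ℕ × ι)) (b : β) :
    topWords code (⋃ b, P b) ∩ P b ⊆ topWords code (P b) := fun _ hv =>
  ⟨hv.2, fun ⟨u, hu, h⟩ => hv.1.2 ⟨u, mem_iUnion_of_mem b hu, h⟩⟩

lemma topWords_union_subset : topWords code (P ∪ Q) ⊆ topWords code P ∪ Q := by
  rintro v ⟨hv | hv, h⟩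
  · exact .inl ⟨hv, fun ⟨u, hu, h'⟩ => h ⟨u, .inl hu, h'⟩⟩
  · exact .inr hv

variable [MeasurableSpace ι]

/-- The net content of `S`: the least total weight of a family of cells covering `S`. -/
noncomputable def netContent (code : ℕ → X → ι) (w : ℕ → ℝ≥0∞) : OuterMeasure X where
  measureOf S := ⨅ (P : Set (ℕ × ι)) (_ : S ⊆ cells code P), wordWeight w P
  empty := le_antisymm (iInf₂_le_of_le ∅ (empty_subset _) measure_empty.le) zero_le
  mono h := le_iInf₂ fun P hP => iInf₂_le P (h.trans hP)
  iUnion_nat S _ := by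
    refine ENNReal.le_of_forall_pos_le_add fun ε hε htop => ?_
    obtain ⟨e, he, hsum⟩ :=
      ENNReal.exists_pos_sum_of_countable' (ε := (ε : ℝ≥0∞)) (by simpa using hε.ne') ℕ
    have hlt (i : ℕ) : ∃ P, S i ⊆ cells code P ∧ wordWeight w P <
        (⨅ (P : Set (ℕ × ι)) (_ : S i ⊆ cells code P), wordWeight w P) + e i := by
      have := ENNReal.lt_add_right (ENNReal.ne_top_of_tsum_ne_top htop.ne i) (he i).ne'
      simpa only [iInf_lt_iff, exists_prop] using this
    choose P hP hPlt using hlt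
    calc _ ≤ wordWeight w (⋃ i, P i) :=
          iInf₂_le _ (cells_iUnion (code := code) P ▸ iUnion_mono hP)
      _ ≤ ∑' i, wordWeight w (P i) := measure_iUnion_le P
      _ ≤ _ := ENNReal.tsum_le_tsum fun i => (hPlt i).le
      _ = _ := ENNReal.tsum_add
      _ ≤ _ := by gcongr

lemma netContent_le (hP : S ⊆ cells code P) : netContent code w S ≤ wordWeight w P :=
  iInf₂_le (f := fun P _ => wordWeight w P) P hP

lemma le_netContent {a : ℝ≥0∞} (h : ∀ P, S ⊆ cells code P → a ≤ wordWeight w P) :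
    a ≤ netContent code w S :=
  le_iInf₂ (f := fun P _ => wordWeight w P) h

lemma exists_wordWeight_lt_of_netContent_lt {a : ℝ≥0∞} (h : netContent code w S < a) :
    ∃ P, S ⊆ cells code P ∧ wordWeight w P < a := by
  by_contra! hcon
  exact h.not_ge (le_netContent hcon)

variable [Countable ι] [MeasurableSingletonClass ι]

lemma wordWeight_apply (P : Set (ℕ × ι)) :
    wordWeight w P = ∑' v, P.indicator (fun v => w v.1) v := by
  rw [wordWeight, withDensity_apply _ .of_discrete, ← lintegral_indicator .of_discrete,
    lintegral_count]

lemma wordWeight_singleton_prod_finset (k : ℕ) (F : Finset ι) :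
    wordWeight w ({k} ×ˢ (F : Set ι)) = F.card * w k := by
  classical
  rw [wordWeight_apply, ← Finset.coe_singleton, ← Finset.coe_product, ← sum_eq_tsum_indicator,
    Finset.sum_product, Finset.sum_singleton]
  exact (Finset.sum_const (w k)).trans (nsmul_eq_mul _ _)

lemma netContent_le_of_mapsTo {k : ℕ} {F : Finset ι} (h : MapsTo (code k) S F) :
    netContent code w S ≤ F.card * w k :=
  wordWeight_singleton_prod_finset (w := w) k F ▸ netContent_le fun _ hx => ⟨k, rfl, h hx⟩

lemma netContent_le_of_subset_cell {k : ℕ} {c : ι} (hS : S ⊆ code k ⁻¹' {c}) :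
    netContent code w S ≤ w k := by
  simpa using netContent_le_of_mapsTo (w := w) (F := {c}) fun x hx => by simpa using hS hx

lemma wordWeight_topWords_union_add_netContent_le (hP : S ⊆ cells code (topWords code P))
    (hQ : S ⊆ cells code Q) :
    wordWeight w (topWords code (P ∪ Q)) + netContent code w S ≤
      wordWeight w (topWords code P) + wordWeight w Q := by
  set T := topWords code P
  set U := topWords code (P ∪ Q)
  have hcover : S ⊆ cells code (((T ∪ Q) \ U) ∪ (T ∩ Q)) := by
    intro x hx
    obtain ⟨i, hi⟩ := hP hx
    obtain ⟨j, hj⟩ := hQ hx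
    rcases lt_trichotomy i j with h | rfl | h
    · exact ⟨j, .inl ⟨.inr hj, fun hU => hU.2 ⟨_, .inl hi.1, h, x, rfl, rfl⟩⟩⟩
    · exact ⟨i, .inr ⟨hi, hj⟩⟩
    · exact ⟨i, .inl ⟨.inl hi, fun hU => hU.2 ⟨_, .inr hj, h, x, rfl, rfl⟩⟩⟩
  calc wordWeight w U + netContent code w S
      ≤ wordWeight w U + (wordWeight w ((T ∪ Q) \ U) + wordWeight w (T ∩ Q)) := by
        gcongr
        exact (netContent_le hcover).trans (measure_union_le _ _)
    _ = wordWeight w (T ∪ Q) + wordWeight w (T ∩ Q) := by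
        rw [← add_assoc, measure_add_sdiff MeasurableSet.of_discrete.nullMeasurableSet,
          union_eq_right.2 topWords_union_subset]
    _ = wordWeight w T + wordWeight w Q := measure_union_add_inter _ .of_discrete

lemma wordWeight_topWords_accumulate_le (hcode : IsNested code) {S : ℕ → Set X}
    (hS : Monotone S) (hfin : ∀ i, netContent code w (S i) ≠ ⊤) {P : ℕ → Set (ℕ × ι)}
    (hP : ∀ i, S i ⊆ cells code (P i)) {e : ℕ → ℝ≥0∞}
    (he : ∀ i, wordWeight w (P i) ≤ netContent code w (S i) + e i) (k : ℕ) :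
    wordWeight w (topWords code (accumulate P k)) ≤
      netContent code w (S k) + ∑ i ∈ Finset.range (k + 1), e i := by
  induction k with
  | zero =>
    rw [accumulate_zero_nat, zero_add, Finset.sum_range_one]
    exact (measure_mono topWords_subset).trans (he 0)
  | succ k ih =>
    have hcover : S k ⊆ cells code (accumulate P k) := (hP k).trans (cells_mono subset_accumulate)
    rw [← ENNReal.add_le_add_iff_right (hfin k), accumulate_succ]
    calc _ ≤ wordWeight w (topWords code (accumulate P k)) + wordWeight w (P (k + 1)) :=
          wordWeight_topWords_union_add_netContent_le (subset_cells_topWords hcode hcover)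
            ((hS k.le_succ).trans (hP (k + 1)))
      _ ≤ _ := add_le_add ih (he (k + 1))
      _ = _ := by rw [Finset.sum_range_succ _ (k + 1)]; ring

/-- Davies' increasing sets lemma, for net contents. -/
lemma netContent_iUnion_of_monotone (hcode : IsNested code) {S : ℕ → Set X} (hS : Monotone S) :
    netContent code w (⋃ i, S i) = ⨆ i, netContent code w (S i) := by
  refine le_antisymm ?_ (iSup_le fun i => measure_mono (subset_iUnion S i))
  refine ENNReal.le_of_forall_pos_le_add fun ε hε htop => ?_
  have hfin i : netContent code w (S i) ≠ ⊤ := ((le_iSup _ i).trans_lt htop).ne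
  obtain ⟨e, he, hsum⟩ :=
    ENNReal.exists_pos_sum_of_countable' (ε := (ε : ℝ≥0∞)) (by simpa using hε.ne') ℕ
  choose P hP hPlt using fun i => exists_wordWeight_lt_of_netContent_lt
    (ENNReal.lt_add_right (hfin i) (he i).ne')
  have hcover : ⋃ i, S i ⊆ cells code (⋃ i, accumulate P i) := by
    rw [iUnion_accumulate, cells_iUnion]
    exact iUnion_mono hP
  have hmono : Monotone fun k => topWords code (⋃ i, accumulate P i) ∩ accumulate P k :=
    fun _ _ h => inter_subset_inter_right _ (monotone_accumulate h)
  calc netContent code w (⋃ i, S i)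
      ≤ wordWeight w (topWords code (⋃ i, accumulate P i)) :=
        netContent_le (subset_cells_topWords hcode hcover)
    _ = ⨆ k, wordWeight w (topWords code (⋃ i, accumulate P i) ∩ accumulate P k) := by
        rw [← hmono.measure_iUnion, ← inter_iUnion, inter_eq_left.2 topWords_subset]
    _ ≤ (⨆ k, netContent code w (S k)) + ε := iSup_le fun k => by
        calc _ ≤ wordWeight w (topWords code (accumulate P k)) :=
              measure_mono (topWords_iUnion_inter_subset _ k)
          _ ≤ _ := wordWeight_topWords_accumulate_le hcode hS hfin hP (fun i => (hPlt i).le) k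
          _ ≤ _ := add_le_add (le_iSup (fun k => netContent code w (S k)) k)
              ((ENNReal.sum_le_tsum _).trans hsum.le)

end NetContent

section CompactSubset

/-- A family of codings of a metric space by cells, like the codings by dyadic cubes: the cells of
generation `k` have diameter at most `2⁻ᵏ`, refine the earlier ones, and a set of diameter `O(2⁻ᵏ)`
meets only `O(1)` of them. -/
structure IsDyadicNet {X ι : Type*} [PseudoEMetricSpace X] (code : ℕ → X → ι) : Prop where
  isNested : IsNested code
  ediam_cell_le (k : ℕ) (c : ι) : ediam (code k ⁻¹' {c}) ≤ 2⁻¹ ^ k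
  exists_mapsTo (r : ℝ≥0) : ∃ N : ℕ, ∀ (k : ℕ) (S : Set X), ediam S ≤ r * 2⁻¹ ^ k →
    ∃ F : Finset ι, F.card ≤ N ∧ MapsTo (code k) S F

lemma IsDyadicNet.exists_subset_biUnion_cell {X ι : Type*} [PseudoEMetricSpace X]
    {code : ℕ → X → ι} (hcode : IsDyadicNet code) {S : Set X} {j : ℕ} {c : ι}
    (hS : S ⊆ code j ⁻¹' {c}) :
    ∃ F : Finset ι, S ⊆ ⋃ c' ∈ F, S ∩ code (j + 1) ⁻¹' {c'} := by
  obtain ⟨N, hN⟩ := hcode.exists_mapsTo 2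
  obtain ⟨F, -, hF⟩ := hN (j + 1) S <| by
    calc ediam S ≤ 2⁻¹ ^ j := (ediam_mono hS).trans (hcode.ediam_cell_le j c)
      _ = 2 * 2⁻¹ ^ (j + 1) := by
        rw [pow_succ', ← mul_assoc, ENNReal.mul_inv_cancel two_ne_zero ofNat_ne_top, one_mul]
  exact ⟨F, fun x hx => mem_biUnion (hF hx) ⟨hx, rfl⟩⟩

lemma ediam_thickening_two_inv_pow_le {X : Type*} [PseudoEMetricSpace X] {S : Set X} {k : ℕ}
    (hS : ediam S ≤ 2⁻¹ ^ k) : ediam (thickening (2⁻¹ ^ k) S) ≤ 3 * 2⁻¹ ^ k := by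
  calc ediam (thickening (2⁻¹ ^ k) S) ≤ ediam S + 2 * ((2⁻¹ ^ k : ℝ≥0) : ℝ≥0∞) := by
        simpa using ediam_thickening_le (s := S) (2⁻¹ ^ k : ℝ≥0)
    _ ≤ 2⁻¹ ^ k + 2 * 2⁻¹ ^ k := by
        gcongr
        simp [ENNReal.coe_inv, ENNReal.inv_pow]
    _ = 3 * 2⁻¹ ^ k := by ring

variable {X ι : Type*} [MeasurableSpace ι] [Countable ι] [MeasurableSingletonClass ι]
  {code : ℕ → X → ι} {w : ℕ → ℝ≥0∞}

lemma exists_lt_netContent_image_forall_lt_le (hcode : IsNested code) (f : (ℕ → ℕ) → X)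
    {a : ℝ≥0∞} (ha : a < netContent code w (range f)) :
    ∃ N : ℕ → ℕ, ∀ k, a < netContent code w (f '' {x | ∀ i < k, x i ≤ N i}) := by
  have hstep (k : ℕ) (B : Set (ℕ → ℕ)) (hB : a < netContent code w (f '' B)) :
      ∃ n, a < netContent code w (f '' (B ∩ {x | x k ≤ n})) := by
    have hunion : f '' B = ⋃ n : ℕ, f '' (B ∩ {x | x k ≤ n}) := by
      rw [← image_iUnion, ← inter_iUnion, inter_eq_left.2]
      exact fun x _ => mem_iUnion.2 ⟨x k, le_refl (x k)⟩
    rw [hunion, netContent_iUnion_of_monotone hcode] at hB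
    · exact lt_iSup_iff.1 hB
    · exact fun m n hmn => image_mono <|
        inter_subset_inter_right _ fun x (hx : x k ≤ m) => hx.trans hmn
  choose! n hn using hstep
  obtain ⟨B, hB₀, hB⟩ : ∃ B : ℕ → Set (ℕ → ℕ), B 0 = univ ∧
      ∀ k, B (k + 1) = B k ∩ {x | x k ≤ n k (B k)} :=
    ⟨fun k => Nat.rec univ (fun k B => B ∩ {x | x k ≤ n k B}) k, rfl, fun _ => rfl⟩
  have hlt (k : ℕ) : a < netContent code w (f '' B k) := by
    induction k with
    | zero => rwa [hB₀, image_univ]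
    | succ k ih => exact hB k ▸ hn k _ ih
  have hBle (k : ℕ) : B k = {x | ∀ i < k, x i ≤ n i (B i)} := by
    induction k with
    | zero => simp [hB₀]
    | succ k ih =>
      ext x
      rw [hB, mem_inter_iff, mem_ofPred_eq, mem_ofPred_eq, Nat.forall_lt_succ_right]
      exact and_congr_left fun _ => Set.ext_iff.1 ih x
  exact ⟨fun i => n i (B i), fun k => hBle k ▸ hlt k⟩

lemma exists_forall_lt_le_subset_of_isOpen {N : ℕ → ℕ} {V : Set (ℕ → ℕ)} (hV : IsOpen V)
    (hNV : univ.pi (fun i => Iic (N i)) ⊆ V) : ∃ k, {x | ∀ i < k, x i ≤ N i} ⊆ V := by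
  by_contra! hcon
  choose x hx hxV using fun k => not_subset.1 (hcon k)
  have hcompact : IsCompact (univ.pi fun i => Iic (N i)) :=
    isCompact_univ_pi fun i => (finite_Iic _).isCompact
  obtain ⟨z, hz, φ, hφ, hlim⟩ := hcompact.tendsto_subseq (x := fun k i => min (x k i) (N i))
    fun k i _ => min_le_right (x k i) (N i)
  have hxlim : Tendsto (x ∘ φ) atTop (𝓝 z) := by
    rw [tendsto_pi_nhds] at hlim ⊢
    refine fun i => (hlim i).congr' ?_
    filter_upwards [eventually_gt_atTop i] with k hk
    exact min_eq_left (hx (φ k) i (hk.trans_le hφ.le_apply))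
  exact hV.isClosed_compl.mem_of_tendsto hxlim (.of_forall fun k => hxV (φ k)) (hNV hz)

variable [PseudoEMetricSpace X]

lemma IsDyadicNet.exists_isOpen_netContent_le (hcode : IsDyadicNet code) :
    ∃ N : ℕ, ∀ (w : ℕ → ℝ≥0∞) (P : Set (ℕ × ι)), ∃ G, IsOpen G ∧ cells code P ⊆ G ∧
      netContent code w G ≤ N * wordWeight w P := by
  obtain ⟨N, hN⟩ := hcode.exists_mapsTo 3
  let G (v : ℕ × ι) : Set X := thickening (2⁻¹ ^ v.1) (code v.1 ⁻¹' {v.2})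
  have hG (w : ℕ → ℝ≥0∞) (v : ℕ × ι) : netContent code w (G v) ≤ N * w v.1 := by
    obtain ⟨F, hFN, hF⟩ := hN v.1 (G v)
      (ediam_thickening_two_inv_pow_le (hcode.ediam_cell_le v.1 v.2))
    exact (netContent_le_of_mapsTo hF).trans (by gcongr)
  refine ⟨N, fun w P => ⟨⋃ v ∈ P, G v, isOpen_biUnion fun v _ => isOpen_thickening, ?_, ?_⟩⟩
  · exact fun x ⟨k, hk⟩ => mem_biUnion hk (self_subset_thickening (by positivity) _ rfl)
  · calc netContent code w (⋃ v ∈ P, G v) ≤ ∑' v : P, netContent code w (G v) :=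
          measure_biUnion_le _ P.to_countable _
      _ ≤ ∑' v : P, N * w v.1.1 := ENNReal.tsum_le_tsum fun v => hG w v
      _ = N * wordWeight w P := by
          rw [ENNReal.tsum_mul_left, wordWeight_apply, ← tsum_subtype]

lemma IsDyadicNet.exists_isCompact_netContent_ne_zero (hcode : IsDyadicNet code) {E : Set X}
    (hE : AnalyticSet E) (hE₀ : netContent code w E ≠ 0) :
    ∃ K ⊆ E, IsCompact K ∧ netContent code w K ≠ 0 := by
  rw [AnalyticSet] at hE
  obtain rfl | ⟨f, hf, rfl⟩ := hE
  · exact absurd measure_empty hE₀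
  obtain ⟨a, ha₀, ha⟩ := exists_between (pos_iff_ne_zero.2 hE₀)
  obtain ⟨N, hN⟩ := exists_lt_netContent_image_forall_lt_le hcode.isNested f ha
  have hcompact : IsCompact (univ.pi fun i => Iic (N i)) :=
    isCompact_univ_pi fun i => (finite_Iic _).isCompact
  refine ⟨f '' univ.pi fun i => Iic (N i), image_subset_range _ _, hcompact.image hf, fun h₀ => ?_⟩
  obtain ⟨M, hM⟩ := hcode.exists_isOpen_netContent_le
  obtain ⟨P, hP, hPa⟩ : ∃ P, f '' univ.pi (fun i => Iic (N i)) ⊆ cells code P ∧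
      wordWeight w P < a / M := exists_wordWeight_lt_of_netContent_lt <|
    h₀ ▸ ENNReal.div_pos ha₀.ne' (natCast_ne_top M)
  obtain ⟨G, hG, hPG, hGP⟩ := hM w P
  obtain ⟨k, hk⟩ := exists_forall_lt_le_subset_of_isOpen (hG.preimage hf)
    (image_subset_iff.1 (hP.trans hPG))
  refine lt_irrefl a ?_
  calc a < netContent code w (f '' {x | ∀ i < k, x i ≤ N i}) := hN k
    _ ≤ netContent code w G := measure_mono (image_subset_iff.2 hk)
    _ ≤ M * (a / M) := hGP.trans (by gcongr)
    _ ≤ a := ENNReal.mul_div_le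

end CompactSubset

section NetFrostman

variable {X ι : Type*} [MeasurableSpace X] {code : ℕ → X → ι}

lemma sum_measure_cell_le (hcode : IsNested code) {j i : ℕ} (hji : j ≤ i) {m : ι → Measure X}
    (hm : ∀ c, m c (code j ⁻¹' {c})ᶜ = 0) (F : Finset ι) {c' : ι} {a : ℝ≥0∞}
    (ha : ∀ c, m c (code i ⁻¹' {c'}) ≤ a) : ∑ c ∈ F, m c (code i ⁻¹' {c'}) ≤ a := by
  classical
  obtain hempty | ⟨y, hy⟩ := (code i ⁻¹' {c'}).eq_empty_or_nonempty
  · simp [hempty]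
  have hzero (c : ι) (hc : c ≠ code j y) : m c (code i ⁻¹' {c'}) = 0 :=
    measure_mono_null (fun x (hx : code i x = c') (hxc : code j x = c) =>
      hc (hxc.symm.trans (hcode hji (hx.trans hy.symm)))) (hm c)
  calc ∑ c ∈ F, m c (code i ⁻¹' {c'}) ≤ ∑ c ∈ F, if c = code j y then a else 0 :=
        Finset.sum_le_sum fun c _ => by
          split_ifs with hc
          exacts [ha c, (hzero c hc).le]
    _ ≤ a := by
        rw [Finset.sum_ite_eq']
        split_ifs
        exacts [le_rfl, zero_le]

lemma exists_le_one_mul_eq {a b : ℝ≥0∞} (hab : a ≤ b) (hb : b ≠ ⊤) : ∃ θ ≤ 1, θ * b = a := by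
  refine ⟨a / b, ENNReal.div_le_of_le_mul (by rwa [one_mul]), ?_⟩
  obtain rfl | hb₀ := eq_or_ne b 0
  · rw [mul_zero, le_zero_iff.1 hab]
  · exact ENNReal.div_mul_cancel hb₀ hb

lemma exists_probabilityMeasure_of_isCompact [PseudoEMetricSpace X] [T2Space X] [BorelSpace X]
    {K : Set X} (hK : IsCompact K) {ν : ℕ → ProbabilityMeasure X}
    (hν : ∀ d, (ν d : Measure X) Kᶜ = 0) :
    ∃ μ : ProbabilityMeasure X, (μ : Measure X) Kᶜ = 0 ∧ ∀ G, IsOpen G → ∀ a : ℝ≥0∞,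
      (∀ᶠ d in atTop, (ν d : Measure X) G ≤ a) → (μ : Measure X) G ≤ a := by
  have hnull (μ : ProbabilityMeasure X) : μ Kᶜ ≤ 0 ↔ (μ : Measure X) Kᶜ = 0 := by
    rw [← ProbabilityMeasure.ennreal_coeFn_eq_coeFn_toMeasure, le_zero_iff, ENNReal.coe_eq_zero]
  obtain ⟨μ, hμ, hlim⟩ :=
    (isCompact_setOfPred_probabilityMeasure_mass_eq_compl_isCompact_le (u := fun _ => 0)
      (K := fun _ => K) tendsto_const_nhds (fun _ => hK) (.inr monotone_const)).ultrafilter_le_nhds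
      ((hyperfilter ℕ).map ν) (le_principal_iff.2 <|
        Filter.univ_mem' (f := (hyperfilter ℕ : Filter ℕ)) fun d _ => (hnull _).2 (hν d))
  refine ⟨μ, (hnull μ).1 (hμ 0), fun G hG a ha => ?_⟩
  calc (μ : Measure X) G ≤ (hyperfilter ℕ : Filter ℕ).liminf fun d => (ν d : Measure X) G :=
        ProbabilityMeasure.le_liminf_measure_open_of_tendsto
          (L := (hyperfilter ℕ : Filter ℕ)) hlim hG
    _ ≤ a := liminf_le_of_frequently_le' (ha.filter_mono Nat.hyperfilter_le_atTop).frequently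

variable [MeasurableSpace ι] [Countable ι] [MeasurableSingletonClass ι] [PseudoEMetricSpace X]
  {w : ℕ → ℝ≥0∞}

lemma IsDyadicNet.exists_measure_univ_eq_netContent [MeasurableSingletonClass X]
    (hcode : IsDyadicNet code) (hw : ∀ k, w k ≠ ⊤) (d : ℕ) (j : ℕ) (c : ι) (S : Set X)
    (hS : S ⊆ code j ⁻¹' {c}) :
    ∃ μ : Measure X, μ Sᶜ = 0 ∧ μ univ = netContent code w S ∧
      ∀ i, j ≤ i → i ≤ j + d → ∀ c', μ (code i ⁻¹' {c'}) ≤ w i := by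
  induction d generalizing j c S with
  | zero =>
    obtain rfl | ⟨x, hx⟩ := S.eq_empty_or_nonempty
    · exact ⟨0, by simp⟩
    refine ⟨netContent code w S • Measure.dirac x, by simp [hx], by simp, fun i hji hij c' => ?_⟩
    obtain rfl : i = j := by lia
    refine (measure_mono (subset_univ _)).trans ?_
    simpa using netContent_le_of_subset_cell hS
  | succ d ih =>
    obtain ⟨F, hF⟩ := hcode.exists_subset_biUnion_cell hS
    choose m hmS hm hmcell using
      fun c' => ih (j + 1) c' (S ∩ code (j + 1) ⁻¹' {c'}) inter_subset_right
    obtain ⟨θ, hθ, hθsum⟩ := exists_le_one_mul_eq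
      (a := netContent code w S) (b := ∑ c' ∈ F, netContent code w (S ∩ code (j + 1) ⁻¹' {c'}))
      ((measure_mono hF).trans (measure_biUnion_finset_le _ _))
      (ENNReal.sum_ne_top.2 fun c' _ =>
        ne_top_of_le_ne_top (hw (j + 1)) (netContent_le_of_subset_cell inter_subset_right))
    have happly (A : Set X) : (θ • ∑ c' ∈ F, m c') A = θ * ∑ c' ∈ F, m c' A := by
      rw [Measure.smul_apply, Measure.finsetSum_apply, smul_eq_mul]
    have huniv : (θ • ∑ c' ∈ F, m c') univ = netContent code w S := by simp only [happly, hm, hθsum]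
    refine ⟨θ • ∑ c' ∈ F, m c', ?_, huniv, fun i hji hij c' => ?_⟩
    · rw [happly, Finset.sum_eq_zero fun c' _ => measure_mono_null
        (compl_subset_compl.2 inter_subset_left) (hmS c'), mul_zero]
    obtain rfl | hji := hji.eq_or_lt
    · exact (measure_mono (subset_univ _)).trans (huniv ▸ netContent_le_of_subset_cell hS)
    calc (θ • ∑ c' ∈ F, m c') (code i ⁻¹' {c'}) ≤ 1 * ∑ c'' ∈ F, m c'' (code i ⁻¹' {c'}) := by
          rw [happly]
          gcongr
      _ ≤ w i := by
          rw [one_mul]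
          exact sum_measure_cell_le hcode.isNested hji
            (fun c => measure_mono_null (compl_subset_compl.2 inter_subset_right) (hmS c)) F
            fun c => hmcell c i hji (by lia) c'

/-- The `d`-th approximation obeys the bound in generations `0, …, d`, so a weak limit of the
approximations obeys it in every generation. -/
lemma IsDyadicNet.exists_probabilityMeasure [T2Space X] [BorelSpace X]
    (hcode : IsDyadicNet code) (hw : ∀ k, w k ≠ ⊤) {E : Set X} (hE : AnalyticSet E)
    (hE₀ : netContent code w E ≠ 0) :
    ∃ μ : ProbabilityMeasure X, (∀ᵐ x ∂(μ : Measure X), x ∈ E) ∧ ∃ C : ℝ≥0∞, C ≠ ⊤ ∧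
      ∀ k U, ediam U ≤ 2⁻¹ ^ k → (μ : Measure X) U ≤ C * w k := by
  obtain ⟨K, hKE, hK, hK₀⟩ := hcode.exists_isCompact_netContent_ne_zero hE hE₀
  obtain ⟨c, hc⟩ : ∃ c, netContent code w (K ∩ code 0 ⁻¹' {c}) ≠ 0 := by
    by_contra! hcon
    exact hK₀ (measure_mono_null (t := ⋃ c, K ∩ code 0 ⁻¹' {c})
      (fun x hx => mem_iUnion.2 ⟨code 0 x, hx, rfl⟩) (measure_iUnion_null hcon))
  set a := netContent code w (K ∩ code 0 ⁻¹' {c})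
  have ha : a ≠ ⊤ := ne_top_of_le_ne_top (hw 0) (netContent_le_of_subset_cell inter_subset_right)
  choose m hmK hm hmcell using fun d =>
    hcode.exists_measure_univ_eq_netContent hw d 0 c (K ∩ code 0 ⁻¹' {c}) inter_subset_right
  let ν (d : ℕ) : ProbabilityMeasure X :=
    ⟨a⁻¹ • m d, ⟨by rw [Measure.smul_apply, hm, smul_eq_mul, ENNReal.inv_mul_cancel hc ha]⟩⟩
  have hν (d : ℕ) (A : Set X) : (ν d : Measure X) A = a⁻¹ * m d A := rfl
  obtain ⟨μ, hμK, hμ⟩ := exists_probabilityMeasure_of_isCompact hK (ν := ν) fun d => by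
    rw [hν, measure_mono_null (compl_subset_compl.2 inter_subset_left) (hmK d), mul_zero]
  obtain ⟨N, hN⟩ := hcode.exists_mapsTo 3
  refine ⟨μ, measure_mono_null (compl_subset_compl.2 hKE) hμK, a⁻¹ * N,
    ENNReal.mul_ne_top (ENNReal.inv_ne_top.2 hc) (natCast_ne_top N), fun k U hU => ?_⟩
  obtain ⟨F, hFN, hF⟩ := hN k _ (ediam_thickening_two_inv_pow_le hU)
  refine (measure_mono (self_subset_thickening (δ := 2⁻¹ ^ k) (by positivity) U)).trans
    (hμ _ isOpen_thickening _ ?_)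
  filter_upwards [eventually_ge_atTop k] with d hd
  calc (ν d : Measure X) (thickening (2⁻¹ ^ k) U)
      ≤ a⁻¹ * ∑ c' ∈ F, m d (code k ⁻¹' {c'}) := by
        rw [hν]
        gcongr
        exact (measure_mono fun x hx => mem_biUnion (hF hx) rfl).trans
          (measure_biUnion_finset_le F fun c' => code k ⁻¹' {c'})
    _ ≤ a⁻¹ * ∑ _ ∈ F, w k := by
        gcongr with c'
        exact hmcell d k k.zero_le (by lia) c'
    _ ≤ a⁻¹ * N * w k := by
        rw [Finset.sum_const, nsmul_eq_mul, mul_assoc]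
        gcongr

end NetFrostman

section ProductDimension

lemma IsDyadicNet.hausdorffMeasure_eq_zero {X ι : Type*} [EMetricSpace X] [MeasurableSpace X]
    [BorelSpace X] [MeasurableSpace ι] [Countable ι] [MeasurableSingletonClass ι]
    {code : ℕ → X → ι} (hcode : IsDyadicNet code) {s : ℝ} (hs : 0 < s) {E : Set X}
    (hE : netContent code (fun k => (2⁻¹ ^ k) ^ s) E = 0) : μH[s] E = 0 := by
  set w : ℕ → ℝ≥0∞ := fun k => (2⁻¹ ^ k) ^ s
  have hw (n : ℕ) : 0 < w n := ENNReal.rpow_pos (ENNReal.pow_pos (by simp) n) (by finiteness)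
  choose P hEP hPw using fun n => exists_wordWeight_lt_of_netContent_lt (hE.trans_lt (hw n))
  have hgen (n : ℕ) (v : P n) : (2⁻¹ : ℝ≥0∞) ^ v.1.1 ≤ 2⁻¹ ^ n := by
    refine (ENNReal.rpow_le_rpow_iff hs).1 (le_trans ?_ (hPw n).le)
    simpa only [wordWeight_apply, indicator_of_mem v.2] using
      ENNReal.le_tsum (f := (P n).indicator fun v => w v.1) v.1
  have hsum (n : ℕ) : ∑' v : P n, ediam (code v.1.1 ⁻¹' {v.1.2}) ^ s ≤ (2⁻¹ ^ n) ^ s := by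
    calc ∑' v : P n, ediam (code v.1.1 ⁻¹' {v.1.2}) ^ s ≤ ∑' v : P n, w v.1.1 :=
          ENNReal.tsum_le_tsum fun v => ENNReal.rpow_le_rpow (hcode.ediam_cell_le _ _) hs.le
      _ = wordWeight w (P n) := by
          rw [wordWeight_apply]
          exact tsum_subtype (P n) fun v => w v.1
      _ ≤ (2⁻¹ ^ n) ^ s := (hPw n).le
  refine le_zero_iff.1 <| (Measure.hausdorffMeasure_le_liminf_tsum s E (fun n => 2⁻¹ ^ n)
    (ENNReal.tendsto_pow_atTop_nhds_zero_of_lt_one ENNReal.one_half_lt_one)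
    (fun n (v : P n) => code v.1.1 ⁻¹' {v.1.2})
    (.of_forall fun n v => (hcode.ediam_cell_le _ _).trans (hgen n v))
    (.of_forall fun n x hx => ?_)).trans_eq <|
    (tendsto_of_tendsto_of_tendsto_of_le_of_le tendsto_const_nhds (tendsto_two_inv_pow_rpow hs)
      (fun _ => zero_le) hsum).liminf_eq
  obtain ⟨k, hk⟩ := hEP n hx
  exact mem_iUnion.2 ⟨⟨_, hk⟩, rfl⟩

lemma IsDyadicNet.prod {X Y ι κ : Type*} [PseudoEMetricSpace X] [PseudoEMetricSpace Y]
    {code : ℕ → X → ι} {code' : ℕ → Y → κ} (h : IsDyadicNet code) (h' : IsDyadicNet code') :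
    IsDyadicNet fun k => Prod.map (code k) (code' k) where
  isNested j k x y hjk hxy := Prod.ext (h.isNested hjk (congrArg Prod.fst hxy))
    (h'.isNested hjk (congrArg Prod.snd hxy))
  ediam_cell_le k c := by
    refine ediam_le fun x hx y hy => ?_
    obtain ⟨hx₁, hx₂⟩ := Prod.ext_iff.1 hx
    obtain ⟨hy₁, hy₂⟩ := Prod.ext_iff.1 hy
    exact max_le
      ((edist_le_ediam_of_mem (s := code k ⁻¹' {c.1}) hx₁ hy₁).trans (h.ediam_cell_le k c.1))
      ((edist_le_ediam_of_mem (s := code' k ⁻¹' {c.2}) hx₂ hy₂).trans (h'.ediam_cell_le k c.2))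
  exists_mapsTo r := by
    obtain ⟨N, hN⟩ := h.exists_mapsTo r
    obtain ⟨N', hN'⟩ := h'.exists_mapsTo r
    refine ⟨N * N', fun k S hS => ?_⟩
    obtain ⟨F, hFN, hF⟩ := hN k (Prod.fst '' S) <| by
      simpa using (LipschitzWith.prod_fst.ediam_image_le S).trans (by simpa using hS)
    obtain ⟨F', hFN', hF'⟩ := hN' k (Prod.snd '' S) <| by
      simpa using (LipschitzWith.prod_snd.ediam_image_le S).trans (by simpa using hS)
    refine ⟨F ×ˢ F', (Finset.card_product F F').trans_le (Nat.mul_le_mul hFN hFN'), fun x hx => ?_⟩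
    exact Finset.mk_mem_product (hF (mem_image_of_mem _ hx)) (hF' (mem_image_of_mem _ hx))

lemma IsDyadicNet.hausdorffMeasure_prod_eq_zero {X Y ι κ : Type*} [EMetricSpace X]
    [MeasurableSpace X] [BorelSpace X] [EMetricSpace Y] [MeasurableSpace Y] [BorelSpace Y]
    [SecondCountableTopologyEither X Y] [Countable ι] [Countable κ]
    {code : ℕ → X → ι} {code' : ℕ → Y → κ} (h : IsDyadicNet code) (h' : IsDyadicNet code')
    {K : Set X} {b : ℕ} (hK : ∀ k, ∃ F : Finset ι, F.card ≤ (2 ^ k) ^ b ∧ MapsTo (code k) K F)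
    {d : ℝ} (hd : 0 < d) {E : Set Y} (hE : μH[d] E = 0) : μH[d + b] (K ×ˢ E) = 0 := by
  let : MeasurableSpace ι := ⊤
  let : MeasurableSpace κ := ⊤
  refine (h.prod h').hausdorffMeasure_eq_zero (by positivity) ?_
  set w : ℕ → ℝ≥0∞ := fun k => (2⁻¹ ^ k) ^ (d + b)
  let φ : OuterMeasure Y := OuterMeasure.map Prod.snd <| OuterMeasure.restrict (K ×ˢ univ) <|
    netContent (fun k => Prod.map (code k) (code' k)) w
  have hφ (U : Set Y) : φ U = netContent (fun k => Prod.map (code k) (code' k)) w (K ×ˢ U) := by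
    simp only [φ, OuterMeasure.map_apply, OuterMeasure.restrict_apply]
    congr 1
    ext x
    simp [and_comm]
  obtain ⟨N, hN⟩ := h'.exists_mapsTo 1
  rw [← hφ]
  refine outerMeasure_eq_zero_of_hausdorffMeasure_eq_zero (C := N * 2 ^ d) (by finiteness)
    (fun U hU => le_mul_rpow_of_forall_two_inv_pow (natCast_ne_top N) hd hU fun k hk => ?_) hE
  obtain ⟨F, hFb, hF⟩ := hK k
  obtain ⟨F', hFN', hF'⟩ := hN k U (by simpa using hk)
  have hmaps : MapsTo (Prod.map (code k) (code' k)) (K ×ˢ U) (F ×ˢ F' : Finset (ι × κ)) :=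
    fun x hx => Finset.mk_mem_product (hF hx.1) (hF' hx.2)
  calc φ U ≤ (F ×ˢ F').card * w k := hφ U ▸ netContent_le_of_mapsTo hmaps
    _ ≤ ((2 ^ k) ^ b * N : ℕ) * w k := by
        gcongr
        exact (Finset.card_product F F').trans_le (Nat.mul_le_mul hFb hFN')
    _ = N * (2⁻¹ ^ k) ^ d * (2 ^ k * 2⁻¹ ^ k) ^ b := by
        simp only [w]
        rw [ENNReal.rpow_add _ _ (by simp) (by finiteness), ENNReal.rpow_natCast]
        push_cast
        ring
    _ = N * (2⁻¹ ^ k) ^ d := by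
        rw [← mul_pow 2, ENNReal.mul_inv_cancel two_ne_zero ofNat_ne_top, one_pow, one_pow, mul_one]

end ProductDimension

section DyadicCubes

variable {J : Type*}

/-- The index of the half-open dyadic cube of side `2⁻ᵏ` containing `x`. -/
noncomputable def dyadicCode (k : ℕ) (x : J → ℝ) : J → ℤ :=
  fun j => ⌊(2 : ℝ) ^ k * x j⌋

lemma dyadicCode_add_apply (j i : ℕ) (x : J → ℝ) (a : J) :
    dyadicCode j x a = dyadicCode (j + i) x a / (2 ^ i : ℕ) := by
  rw [dyadicCode, dyadicCode, ← Int.natCast_mul_floor_div_cancel (n := 2 ^ i) (by positivity)]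
  congr 2
  push_cast
  ring

lemma isNested_dyadicCode : IsNested (dyadicCode (J := J)) := by
  intro j k x y hjk hxy
  obtain ⟨i, rfl⟩ := Nat.exists_eq_add_of_le hjk
  funext a
  rw [dyadicCode_add_apply j i, dyadicCode_add_apply j i, hxy]

lemma abs_floor_sub_floor_le {u v : ℝ} {n : ℕ} (h : |u - v| ≤ n) : |⌊u⌋ - ⌊v⌋| ≤ n := by
  rw [abs_sub_le_iff, sub_le_iff_le_add', sub_le_iff_le_add', ← Int.floor_add_natCast,
    ← Int.floor_add_natCast] at *
  exact ⟨Int.floor_mono h.1, Int.floor_mono h.2⟩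

variable [Fintype J]

lemma ediam_dyadicCode_preimage_le (k : ℕ) (c : J → ℤ) :
    ediam (dyadicCode k ⁻¹' {c}) ≤ 2⁻¹ ^ k := by
  refine ediam_le fun x (hx : _ = c) y (hy : _ = c) => edist_pi_le_iff.2 fun j => ?_
  have hlt := Int.abs_sub_lt_one_of_floor_eq_floor (congrFun (hx.trans hy.symm) j)
  rw [← mul_sub, abs_mul, abs_of_pos (by positivity), ← lt_div_iff₀' (by positivity), one_div,
    ← inv_pow] at hlt
  rw [edist_dist, Real.dist_eq]
  refine (ENNReal.ofReal_le_ofReal hlt.le).trans_eq ?_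
  rw [ENNReal.ofReal_pow (by positivity), ENNReal.ofReal_inv_of_pos two_pos, ENNReal.ofReal_ofNat]

lemma isDyadicNet_dyadicCode : IsDyadicNet (dyadicCode (J := J)) where
  isNested := isNested_dyadicCode
  ediam_cell_le := ediam_dyadicCode_preimage_le
  exists_mapsTo r := by
    classical
    refine ⟨(2 * ⌈r⌉₊ + 1) ^ Fintype.card J, fun k S hS => ?_⟩
    obtain rfl | ⟨x, hx⟩ := S.eq_empty_or_nonempty
    · exact ⟨∅, by simp⟩
    refine ⟨Fintype.piFinset fun j =>
      Finset.Icc (dyadicCode k x j - ⌈r⌉₊) (dyadicCode k x j + ⌈r⌉₊), ?_, fun y hy => ?_⟩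
    · rw [Fintype.card_piFinset]
      refine Finset.prod_le_pow_card _ _ _ fun j _ => ?_
      rw [Int.card_Icc]
      lia
    · have hdist : edist x y ≤ r * 2⁻¹ ^ k := (edist_le_ediam_of_mem hx hy).trans hS
      simp only [Finset.mem_coe, Fintype.mem_piFinset, Finset.mem_Icc]
      intro j
      have hj : |x j - y j| ≤ r * 2⁻¹ ^ k := by
        have hle : edist (x j) (y j) ≤ (r * 2⁻¹ ^ k : ℝ≥0) := by
          simpa [ENNReal.inv_pow] using (edist_le_pi_edist x y j).trans hdist
        exact Real.dist_eq .. ▸ edist_le_coe.1 hle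
      have hscaled : |(2 : ℝ) ^ k * x j - 2 ^ k * y j| ≤ ⌈r⌉₊ := by
        rw [← mul_sub, abs_mul, abs_of_pos (by positivity)]
        calc (2 : ℝ) ^ k * |x j - y j| ≤ 2 ^ k * (r * 2⁻¹ ^ k) := by gcongr
          _ = r := by rw [mul_left_comm, ← mul_pow, mul_inv_cancel₀ two_ne_zero, one_pow, mul_one]
          _ ≤ ⌈r⌉₊ := Nat.le_ceil r
      have hfloor := abs_le.1 (abs_floor_sub_floor_le hscaled)
      simp only [dyadicCode]
      lia

lemma exists_finset_mapsTo_dyadicCode (c : J → ℤ) (k : ℕ) :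
    ∃ F : Finset (J → ℤ), F.card ≤ (2 ^ k) ^ Fintype.card J ∧
      MapsTo (dyadicCode k) (dyadicCode 0 ⁻¹' {c}) F := by
  classical
  refine ⟨Fintype.piFinset fun j => Finset.Ico (c j * (2 ^ k : ℕ)) ((c j + 1) * (2 ^ k : ℕ)),
    ?_, ?_⟩
  · simp only [Fintype.card_piFinset, Int.card_Ico, ← sub_mul, add_sub_cancel_left, one_mul,
      Int.toNat_natCast, Finset.prod_const, Finset.card_univ, le_refl]
  · rintro x rfl
    simp only [Finset.mem_coe, Fintype.mem_piFinset, Finset.mem_Ico]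
    intro j
    have := dyadicCode_add_apply 0 k x j
    rw [zero_add] at this
    rw [this]
    exact ⟨Int.ediv_mul_le _ (by positivity), Int.lt_ediv_add_one_mul_self _ (by positivity)⟩

lemma dimH_univ_prod_pi_le {J' : Type*} [Fintype J'] (E : Set (J' → ℝ)) :
    dimH ((univ : Set (J → ℝ)) ×ˢ E) ≤ dimH E + Fintype.card J := by
  have huniv : (univ : Set (J → ℝ)) ×ˢ E = ⋃ c, (dyadicCode 0 ⁻¹' {c}) ×ˢ E := by
    rw [← iUnion_prod_const, ← preimage_iUnion, iUnion_of_singleton, preimage_univ]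
  rw [huniv, dimH_iUnion]
  refine iSup_le fun c => ENNReal.le_of_forall_pos_le_add fun ε hε htop => ?_
  lift dimH E to ℝ≥0 using Real.dimH_ne_top E with δ hδ
  have hzero : μH[(δ + ε : ℝ≥0)] E = 0 :=
    hausdorffMeasure_of_dimH_lt (hδ ▸ by exact_mod_cast lt_add_of_pos_right δ hε)
  have hprod := isDyadicNet_dyadicCode.hausdorffMeasure_prod_eq_zero isDyadicNet_dyadicCode
    (exists_finset_mapsTo_dyadicCode c) (by positivity) hzero
  calc dimH ((dyadicCode 0 ⁻¹' {c}) ×ˢ E) ≤ (δ + ε + Fintype.card J : ℝ≥0) :=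
        dimH_le_of_hausdorffMeasure_ne_top <| by push_cast at hprod ⊢; simp [hprod]
    _ = δ + Fintype.card J + ε := by push_cast; ring

lemma dimH_univ_prod_le {V F : Type*} [NormedAddCommGroup V] [NormedSpace ℝ V]
    [FiniteDimensional ℝ V] [NormedAddCommGroup F] [NormedSpace ℝ F] [FiniteDimensional ℝ F]
    (E : Set F) : dimH ((univ : Set V) ×ˢ E) ≤ dimH E + finrank ℝ V := by
  let e₁ : V ≃L[ℝ] (Fin (finrank ℝ V) → ℝ) := ContinuousLinearEquiv.ofFinrankEq (by simp)
  let e₂ : F ≃L[ℝ] (Fin (finrank ℝ F) → ℝ) := ContinuousLinearEquiv.ofFinrankEq (by simp)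
  calc dimH ((univ : Set V) ×ˢ E) = dimH (e₁.prodCongr e₂ '' univ ×ˢ E) :=
        ((e₁.prodCongr e₂).dimH_image _).symm
    _ = dimH ((univ : Set (Fin (finrank ℝ V) → ℝ)) ×ˢ (e₂ '' E)) := by
        congr 1
        have : ⇑(e₁.prodCongr e₂) = Prod.map e₁ e₂ := rfl
        rw [this, prodMap_image_prod, image_univ, e₁.surjective.range_eq]
    _ ≤ dimH E + finrank ℝ V := by
        simpa [e₂.dimH_image] using dimH_univ_prod_pi_le (J := Fin (finrank ℝ V)) (e₂ '' E)

end DyadicCubes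

section FrostmanLemma

lemma exists_isFrostman_pi {J : Type*} [Fintype J] {E : Set (J → ℝ)} (hE : AnalyticSet E)
    {s : ℝ≥0} (hs : 0 < s) (hsE : s < dimH E) :
    ∃ μ : ProbabilityMeasure (J → ℝ),
      (∀ᵐ x ∂(μ : Measure (J → ℝ)), x ∈ E) ∧ IsFrostman (μ : Measure (J → ℝ)) s := by
  obtain ⟨μ, hμE, C, hC, hμ⟩ := isDyadicNet_dyadicCode.exists_probabilityMeasure
    (w := fun k => (2⁻¹ ^ k) ^ (s : ℝ)) (fun k => by finiteness) hE fun h₀ => by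
      have hzero := isDyadicNet_dyadicCode.hausdorffMeasure_eq_zero (by exact_mod_cast hs) h₀
      exact top_ne_zero (hausdorffMeasure_of_lt_dimH hsE ▸ hzero)
  exact ⟨μ, hμE, isFrostman_of_forall_two_inv_pow (by exact_mod_cast hs) hC hμ⟩

lemma exists_isFrostman {F : Type*} [NormedAddCommGroup F] [NormedSpace ℝ F]
    [FiniteDimensional ℝ F] [MeasurableSpace F] [BorelSpace F] {E : Set F} (hE : AnalyticSet E)
    {s : ℝ≥0} (hs : 0 < s) (hsE : s < dimH E) :
    ∃ μ : ProbabilityMeasure F,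
      (∀ᵐ x ∂(μ : Measure F), x ∈ E) ∧ IsFrostman (μ : Measure F) s := by
  let e : F ≃L[ℝ] (Fin (finrank ℝ F) → ℝ) := ContinuousLinearEquiv.ofFinrankEq (by simp)
  obtain ⟨μ, hμE, hμ⟩ := exists_isFrostman_pi (hE.image_of_continuous e.continuous) hs
    (by rwa [e.dimH_image])
  refine ⟨μ.map e.symm.continuous.measurable.aemeasurable, ?_,
    hμ.map s.coe_nonneg e.symm.continuous.measurable e.symm.antilipschitz⟩
  refine e.symm.toHomeomorph.measurableEmbedding.ae_map_iff.2 (hμE.mono ?_)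
  rintro _ ⟨x, hx, rfl⟩
  simpa using hx

end FrostmanLemma

section RieszEnergy

lemma pow_rpow_comm (x : ℝ≥0∞) (t : ℝ) (k : ℕ) : (x ^ k) ^ t = (x ^ t) ^ k := by
  rw [← ENNReal.rpow_natCast, ← ENNReal.rpow_natCast, ← ENNReal.rpow_mul, ← ENNReal.rpow_mul,
    mul_comm]

lemma rpow_neg_le_one_add_tsum {t : ℝ} (ht : 0 < t) (u : ℝ≥0∞) :
    u ^ (-t) ≤ 1 + ∑' k : ℕ, (Iic (2⁻¹ ^ k)).indicator (fun _ => 2 ^ t * (2 ^ t) ^ k) u := by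
  obtain hu | hu := lt_or_ge 1 u
  · refine le_add_right ?_
    rw [ENNReal.rpow_neg, ENNReal.inv_le_one]
    exact ENNReal.one_le_rpow hu.le ht
  refine le_add_left ?_
  obtain rfl | hu₀ := eq_or_ne u 0
  · have hone : (1 : ℝ≥0∞) ≤ 2 ^ t := ENNReal.one_le_rpow one_le_two ht
    calc (0 : ℝ≥0∞) ^ (-t) ≤ ∑' _ : ℕ, 1 := by
          rw [ENNReal.tsum_const_eq_top_of_ne_zero one_ne_zero]
          exact le_top
      _ ≤ _ := ENNReal.tsum_le_tsum fun k => by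
          rw [indicator_of_mem (mem_Iic.2 zero_le)]
          exact one_le_mul hone (one_le_pow₀ hone)
  obtain ⟨k, hk, huk⟩ := exists_two_inv_pow_lt_le hu₀ hu
  calc u ^ (-t) ≤ (2⁻¹ ^ (k + 1)) ^ (-t) := by
        rw [ENNReal.rpow_neg, ENNReal.rpow_neg]
        gcongr
    _ = 2 ^ t * (2 ^ t) ^ k := by
        rw [ENNReal.rpow_neg, ← ENNReal.inv_rpow, ← ENNReal.inv_pow, inv_inv,
          pow_rpow_comm, pow_succ']
    _ = (Iic (2⁻¹ ^ k)).indicator (fun _ => 2 ^ t * (2 ^ t) ^ k) u :=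
        (indicator_of_mem (mem_Iic.2 huk) fun _ : ℝ≥0∞ => 2 ^ t * (2 ^ t) ^ k).symm
    _ ≤ _ := ENNReal.le_tsum k

lemma lintegral_rpow_neg_le {α : Type*} [MeasurableSpace α] {ν : Measure α} {u : α → ℝ≥0∞}
    (hu : Measurable u) {s t : ℝ} (ht : 0 < t) {C : ℝ≥0∞}
    (h : ∀ k : ℕ, ν {x | u x ≤ 2⁻¹ ^ k} ≤ C * (2⁻¹ ^ k) ^ s) :
    ∫⁻ x, u x ^ (-t) ∂ν ≤ ν univ + C * (2 ^ t * (1 - 2 ^ (t - s))⁻¹) := by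
  have hset (k : ℕ) : MeasurableSet {x | u x ≤ 2⁻¹ ^ k} := hu measurableSet_Iic
  calc ∫⁻ x, u x ^ (-t) ∂ν
      ≤ ∫⁻ x, (1 + ∑' k : ℕ, {x | u x ≤ 2⁻¹ ^ k}.indicator (fun _ => 2 ^ t * (2 ^ t) ^ k) x) ∂ν :=
        lintegral_mono fun x => rpow_neg_le_one_add_tsum ht (u x)
    _ = ν univ + ∑' k : ℕ, 2 ^ t * (2 ^ t) ^ k * ν {x | u x ≤ 2⁻¹ ^ k} := by
        rw [lintegral_add_left measurable_const, lintegral_one, lintegral_tsum fun k =>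
          (measurable_const.indicator (hset k)).aemeasurable]
        congr 1
        exact tsum_congr fun k => lintegral_indicator_const (hset k) _
    _ ≤ ν univ + ∑' k : ℕ, C * 2 ^ t * (2 ^ (t - s)) ^ k := by
        refine add_le_add_right (ENNReal.tsum_le_tsum fun k => ?_) _
        refine (mul_le_mul_right (h k) _).trans_eq ?_
        rw [ENNReal.rpow_sub _ _ two_ne_zero ofNat_ne_top, pow_rpow_comm,
          ENNReal.inv_rpow, div_eq_mul_inv, mul_pow]
        ring
    _ = ν univ + C * (2 ^ t * (1 - 2 ^ (t - s))⁻¹) := by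
        rw [ENNReal.tsum_mul_left, ENNReal.tsum_geometric, mul_assoc]

lemma inv_one_sub_two_rpow_sub_ne_top {s t : ℝ} (hts : t < s) :
    (1 - (2 : ℝ≥0∞) ^ (t - s))⁻¹ ≠ ⊤ :=
  ENNReal.inv_ne_top.2 (tsub_pos_of_lt
    (ENNReal.rpow_lt_one_of_one_lt_of_neg one_lt_two (by linarith))).ne'

lemma IsFrostman.lintegral_edist_rpow_neg_ne_top {X : Type*} [PseudoEMetricSpace X]
    [MeasurableSpace X] [OpensMeasurableSpace X] {μ : Measure X} [IsFiniteMeasure μ] {s t : ℝ}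
    (hμ : IsFrostman μ s) (ht : 0 < t) (hts : t < s) (x : X) :
    ∫⁻ y, edist x y ^ (-t) ∂μ ≠ ⊤ := by
  obtain ⟨C, hC, hμC⟩ := hμ
  have hs : 0 < s := ht.trans hts
  have hinv := inv_one_sub_two_rpow_sub_ne_top hts
  refine ne_top_of_le_ne_top (b := μ univ + C * 2 ^ s * (2 ^ t * (1 - 2 ^ (t - s))⁻¹))
    (by finiteness) (lintegral_rpow_neg_le measurable_edist_right ht fun k => ?_)
  have hdiam : ediam {y | edist x y ≤ 2⁻¹ ^ k} ≤ 2 * 2⁻¹ ^ k := by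
    simpa only [closedEBall, edist_comm x] using ediam_closedEBall_le (x := x) (r := 2⁻¹ ^ k)
  calc μ {y | edist x y ≤ 2⁻¹ ^ k} ≤ C * (2 * 2⁻¹ ^ k) ^ s :=
        (hμC _ (ne_top_of_le_ne_top (by finiteness) hdiam)).trans (by gcongr)
    _ = C * 2 ^ s * (2⁻¹ ^ k) ^ s := by rw [ENNReal.mul_rpow_of_nonneg _ _ hs.le, mul_assoc]

lemma measure_le_mul_rpow_of_lintegral_rpow_neg_le {α : Type*} [MeasurableSpace α]
    {μ : Measure α} {u : α → ℝ≥0∞} (hu : Measurable u) {t : ℝ} (ht : 0 ≤ t) {M : ℝ≥0}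
    {r : ℝ≥0∞} (hr : r ≠ ⊤) (hM : ∫⁻ x, u x ^ (-t) ∂μ ≤ M) {T : Set α}
    (hT : ∀ x ∈ T, u x ≤ r) : μ T ≤ M * r ^ t := by
  have hmarkov : r ^ (-t) * μ T ≤ M := by
    calc r ^ (-t) * μ T ≤ r ^ (-t) * μ {x | r ^ (-t) ≤ u x ^ (-t)} := by
          gcongr
          intro x hx
          rw [mem_ofPred_eq, ENNReal.rpow_neg, ENNReal.rpow_neg]
          have := hT x hx
          gcongr
      _ ≤ ∫⁻ x, u x ^ (-t) ∂μ := mul_meas_ge_le_lintegral (hu.pow_const _) _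
      _ ≤ M := hM
  rwa [ENNReal.rpow_neg, mul_comm, ← div_eq_mul_inv, ENNReal.div_le_iff_le_mul
    (.inr coe_ne_top) (.inl (ENNReal.rpow_ne_top_of_nonneg ht hr))] at hmarkov

end RieszEnergy

section AffineGraphs

variable {V : Type*} [NormedAddCommGroup V] [InnerProductSpace ℝ V]

/-- The parametrization `x ↦ (x, ⟪a, x⟫ + b)` of the non-vertical hyperplane `L(a,b)`. -/
def graphMap (p : V × ℝ) (x : V) : V × ℝ := (x, ⟪p.1, x⟫ + p.2)

/-- The non-vertical hyperplane `L(a,b) = {(x, y) | y = ⟪a, x⟫ + b}`, for an arbitrary real inner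
product space in place of `ℝⁿ⁻¹`. -/
def affineGraph (p : V × ℝ) : Set (V × ℝ) := {q | q.2 = ⟪p.1, q.1⟫ + p.2}

lemma range_graphMap (p : V × ℝ) : range (graphMap p) = affineGraph p := by
  ext q
  exact ⟨by rintro ⟨x, rfl⟩; rfl, fun hq => ⟨q.1, Prod.ext rfl (Eq.symm hq)⟩⟩

lemma contDiff_graphMap : ContDiff ℝ 1 fun z : V × (V × ℝ) => graphMap z.2 z.1 :=
  contDiff_fst.prodMk ((contDiff_snd.fst.inner ℝ contDiff_fst).add contDiff_snd.snd)

lemma continuous_graphMap : Continuous fun z : (V × ℝ) × V => graphMap z.1 z.2 :=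
  contDiff_graphMap.continuous.comp continuous_swap

lemma lipschitzWith_graphMap (p : V × ℝ) : LipschitzWith (max 1 ‖p.1‖₊) (graphMap p) :=
  LipschitzWith.id.prodMk <| LipschitzWith.of_dist_le_mul fun x y => by
    rw [dist_add_right, Real.dist_eq, ← inner_sub_right, dist_eq_norm]
    exact abs_real_inner_le_norm _ _

lemma edist_graphMap (p p' : V × ℝ) (x : V) :
    edist (graphMap p x) (graphMap p' x) = ‖⟪(p - p').1, x⟫ + (p - p').2‖ₑ := by
  rw [graphMap, graphMap, Prod.edist_eq, edist_self, max_eq_right zero_le, edist_eq_enorm_sub,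
    Prod.fst_sub, Prod.snd_sub, inner_sub_left]
  congr 1
  ring

lemma biUnion_affineGraph (E : Set (V × ℝ)) :
    ⋃ p ∈ E, affineGraph p = (fun z : V × (V × ℝ) => graphMap z.2 z.1) '' univ ×ˢ E := by
  ext q
  simp only [← range_graphMap, mem_iUnion, mem_range, exists_prop, mem_image, mem_prod, mem_univ,
    true_and, Prod.exists]
  tauto

lemma dimH_biUnion_affineGraph_le [FiniteDimensional ℝ V] (E : Set (V × ℝ)) :
    dimH (⋃ p ∈ E, affineGraph p) ≤ min (dimH E + finrank ℝ V) (finrank ℝ V + 1) := by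
  refine le_min ?_ ?_
  · rw [biUnion_affineGraph]
    exact (contDiff_graphMap.contDiffOn.dimH_image_le convex_univ (subset_univ _)).trans
      (dimH_univ_prod_le E)
  · refine (dimH_mono (subset_univ _)).trans_eq ?_
    rw [Real.dimH_univ_eq_finrank]
    simp

lemma hausdorffMeasure_preimage_graphMap_ne_zero [MeasurableSpace V] [BorelSpace V] {p : V × ℝ}
    {A : Set (V × ℝ)} {s : ℝ} (hs : 0 ≤ s) (h : μH[s] (affineGraph p ∩ A) ≠ 0) :
    μH[s] (graphMap p ⁻¹' A) ≠ 0 := fun h₀ => h <| by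
  rw [← range_graphMap, inter_comm, ← image_preimage_eq_inter_range]
  simpa [h₀] using (lipschitzWith_graphMap p).hausdorffMeasure_image_le hs (graphMap p ⁻¹' A)

lemma norm_lt_two_mul_abs_inner_add {q : V × ℝ} {R : ℝ} (hR : 1 ≤ R)
    (hq : 2 * R * ‖q.1‖ < ‖q‖) {x : V} (hx : ‖x‖ ≤ R) : ‖q‖ < 2 * |⟪q.1, x⟫ + q.2| := by
  have hlt : ‖q.1‖ < ‖q‖ := by nlinarith [norm_nonneg q.1]
  have hq₂ : ‖q‖ = |q.2| := (max_choice ‖q.1‖ ‖q.2‖).resolve_left hlt.ne'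
  have hinner : |⟪q.1, x⟫| ≤ ‖q.1‖ * R := (abs_real_inner_le_norm q.1 x).trans (by gcongr)
  have htri : |q.2| ≤ |⟪q.1, x⟫ + q.2| + |⟪q.1, x⟫| := by
    simpa using abs_sub (⟪q.1, x⟫ + q.2) ⟪q.1, x⟫
  linarith

end AffineGraphs

section Slabs

lemma natCast_mul_measure_le_of_disjoint {V : Type*} [NormedAddCommGroup V] [MeasurableSpace V]
    [BorelSpace V] (L : Measure V) [L.IsAddRightInvariant] {S : Set V} (hSm : MeasurableSet S)
    {R : ℝ} (hSR : S ⊆ closedBall 0 R) {v : V}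
    (hv : Pairwise (Function.onFun Disjoint fun j : ℕ => (· - j • v) ⁻¹' S)) (N : ℕ) :
    N * L S ≤ L (closedBall 0 (R + N * ‖v‖)) := by
  have hsub : ⋃ j ∈ Finset.range N, (· - j • v) ⁻¹' S ⊆ closedBall 0 (R + N * ‖v‖) := by
    refine iUnion₂_subset fun j hj x hx => mem_closedBall_zero_iff.2 ?_
    have hjN : (j : ℝ) ≤ N := by exact_mod_cast (Finset.mem_range.1 hj).le
    calc ‖x‖ ≤ ‖x - j • v‖ + ‖j • v‖ := norm_le_norm_sub_add _ _
      _ ≤ R + N * ‖v‖ := by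
          gcongr
          · exact mem_closedBall_zero_iff.1 (hSR hx)
          · exact norm_nsmul_le.trans (by gcongr)
  calc N * L S = ∑ j ∈ Finset.range N, L ((· - j • v) ⁻¹' S) := by
        simp [sub_eq_add_neg, measure_preimage_add_right]
    _ = L (⋃ j ∈ Finset.range N, (· - j • v) ⁻¹' S) :=
        (measure_biUnion_finset (fun i _ j _ hij => hv hij) fun j _ =>
          measurable_id.sub_const _ hSm).symm
    _ ≤ L (closedBall 0 (R + N * ‖v‖)) := measure_mono hsub

variable {V : Type*} [NormedAddCommGroup V] [InnerProductSpace ℝ V] [FiniteDimensional ℝ V]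
  [MeasurableSpace V] [BorelSpace V] (L : Measure V) [L.IsAddHaarMeasure]

-- The translates of the slab by the multiples of `3 * δ` times the unit normal are disjoint.
lemma natCast_mul_addHaar_slab_le {a : V} (ha : a ≠ 0) (c R : ℝ) {δ : ℝ} (hδ : 0 < δ) (N : ℕ) :
    N * L {x ∈ closedBall 0 R | |⟪a, x⟫ + c| ≤ δ * ‖a‖} ≤
      L (closedBall 0 (R + N * (3 * δ))) := by
  have hw : 0 < δ * ‖a‖ := mul_pos hδ (norm_pos_iff.2 ha)
  let v : V := (3 * δ / ‖a‖) • a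
  have hv : ‖v‖ = 3 * δ := by
    rw [norm_smul, Real.norm_of_nonneg (by positivity)]
    field_simp
  have hav : ⟪a, v⟫ = 3 * δ * ‖a‖ := by
    rw [inner_smul_right, real_inner_self_eq_norm_sq]
    field_simp
  rw [← hv]
  refine natCast_mul_measure_le_of_disjoint L (measurableSet_closedBall.inter <|
    measurableSet_le (f := fun x => |⟪a, x⟫ + c|) (by fun_prop) measurable_const)
    (sep_subset _ _) ((pairwise_disjoint_on _).2 fun i j hij => disjoint_left.2 ?_) N
  rintro x ⟨-, hi⟩ ⟨-, hj⟩
  have hij' : (i : ℝ) + 1 ≤ j := by exact_mod_cast hij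
  rw [mem_ofPred_eq, inner_sub_right, ← Nat.cast_smul_eq_nsmul ℝ, inner_smul_right, hav] at hi hj
  nlinarith [abs_le.1 hi, abs_le.1 hj]

lemma two_pow_mul_addHaar_slab_le {q : V × ℝ} (hq : q ≠ 0) {R : ℝ} (hR : 1 ≤ R) (k : ℕ) :
    2 ^ k * L {x ∈ closedBall 0 R | |⟪q.1, x⟫ + q.2| ≤ 2⁻¹ ^ k * ‖q‖} ≤
      L (closedBall 0 (7 * R)) := by
  have hq' : 0 < ‖q‖ := norm_pos_iff.2 hq
  obtain hle | hlt := le_or_gt ‖q‖ (2 * R * ‖q.1‖)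
  · have hq₁ : q.1 ≠ 0 := fun h₀ => by
      rw [h₀, norm_zero, mul_zero] at hle
      exact hle.not_gt hq'
    have hradius : R + (2 ^ k : ℕ) * (3 * (2⁻¹ ^ k * (2 * R))) = 7 * R := by
      push_cast
      rw [inv_pow]
      field_simp
      norm_num
    rw [← hradius]
    have hmul : 2⁻¹ ^ k * ‖q‖ ≤ 2⁻¹ ^ k * (2 * R) * ‖q.1‖ := by
      rw [mul_assoc]
      gcongr
    refine le_trans ?_ (natCast_mul_addHaar_slab_le L hq₁ q.2 R (by positivity) (2 ^ k))
    rw [Nat.cast_pow, Nat.cast_ofNat]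
    gcongr 2 ^ k * L ?_
    exact fun x hx => ⟨hx.1, hx.2.trans hmul⟩
  obtain rfl | hk := eq_or_ne k 0
  · rw [pow_zero, one_mul]
    exact measure_mono fun x hx => closedBall_subset_closedBall (by linarith) hx.1
  · suffices hempty : {x ∈ closedBall 0 R | |⟪q.1, x⟫ + q.2| ≤ 2⁻¹ ^ k * ‖q‖} = ∅ by
      rw [hempty, measure_empty, mul_zero]
      exact zero_le
    refine eq_empty_of_forall_notMem fun x hx => ?_
    have hpow : (2⁻¹ : ℝ) ^ k ≤ 2⁻¹ := pow_le_of_le_one (by norm_num) (by norm_num) hk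
    have hslab := norm_lt_two_mul_abs_inner_add hR hlt (mem_closedBall_zero_iff.1 hx.1)
    nlinarith [hx.2]

lemma restrict_addHaar_enorm_div_le {q : V × ℝ} (hq : q ≠ 0) {R : ℝ} (hR : 1 ≤ R) (k : ℕ) :
    L.restrict (closedBall 0 R) {x | ‖⟪q.1, x⟫ + q.2‖ₑ / ‖q‖ₑ ≤ 2⁻¹ ^ k} ≤
      L (closedBall 0 (7 * R)) * 2⁻¹ ^ k := by
  have hset : MeasurableSet {x : V | ‖⟪q.1, x⟫ + q.2‖ₑ / ‖q‖ₑ ≤ 2⁻¹ ^ k} :=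
    measurableSet_le (by fun_prop) measurable_const
  rw [Measure.restrict_apply hset, ← ENNReal.inv_pow, ← div_eq_mul_inv,
    ENNReal.le_div_iff_mul_le (.inl (by simp)) (.inl (by finiteness)), mul_comm]
  refine le_trans ?_ (two_pow_mul_addHaar_slab_le L hq hR k)
  gcongr 2 ^ k * L ?_
  refine fun x hx => ⟨hx.2, ?_⟩
  have hle := (ENNReal.div_le_iff (by simpa) (by finiteness)).1 hx.1
  simpa using ENNReal.toReal_mono (by finiteness) hle

lemma exists_setLIntegral_rpow_neg_le {t : ℝ} (ht : 0 < t) (ht₁ : t < 1) {R : ℝ} (hR : 1 ≤ R) :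
    ∃ K : ℝ≥0∞, K ≠ ⊤ ∧ ∀ q : V × ℝ,
      ∫⁻ x in closedBall 0 R, ‖⟪q.1, x⟫ + q.2‖ₑ ^ (-t) ∂L ≤ K * ‖q‖ₑ ^ (-t) := by
  have hball (r : ℝ) : L (closedBall 0 r) ≠ ⊤ := measure_closedBall_lt_top.ne
  have hball₇ := hball (7 * R)
  have hinv := inv_one_sub_two_rpow_sub_ne_top ht₁
  have htop : (2 : ℝ≥0∞) ^ t ≠ ⊤ := ENNReal.rpow_ne_top_of_nonneg ht.le ofNat_ne_top
  refine ⟨L (closedBall 0 R) + L (closedBall 0 (7 * R)) * (2 ^ t * (1 - 2 ^ (t - 1))⁻¹),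
    by finiteness [hball R], fun q => ?_⟩
  obtain rfl | hq := eq_or_ne q 0
  · have hR' : L (closedBall 0 R) ≠ 0 := (measure_closedBall_pos L 0 (by linarith)).ne'
    simp [ENNReal.zero_rpow_of_neg (neg_lt_zero.2 ht), ENNReal.mul_top, hR']
  have hq' : ‖q‖ₑ ≠ 0 := enorm_ne_zero.2 hq
  let u : V → ℝ≥0∞ := fun x => ‖⟪q.1, x⟫ + q.2‖ₑ / ‖q‖ₑ
  have hu : Measurable u := by fun_prop
  calc ∫⁻ x in closedBall 0 R, ‖⟪q.1, x⟫ + q.2‖ₑ ^ (-t) ∂L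
      = ∫⁻ x in closedBall 0 R, u x ^ (-t) * ‖q‖ₑ ^ (-t) ∂L := by
        refine lintegral_congr fun x => ?_
        rw [← ENNReal.mul_rpow_of_ne_top (ENNReal.div_ne_top enorm_ne_top hq') enorm_ne_top,
          ENNReal.div_mul_cancel hq' enorm_ne_top]
    _ = (∫⁻ x in closedBall 0 R, u x ^ (-t) ∂L) * ‖q‖ₑ ^ (-t) :=
        lintegral_mul_const _ (hu.pow_const _)
    _ ≤ _ := by
        gcongr
        rw [← Measure.restrict_apply_univ (μ := L) (closedBall 0 R)]
        refine lintegral_rpow_neg_le hu ht fun k => ?_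
        rw [ENNReal.rpow_one]
        exact restrict_addHaar_enorm_div_le L hq hR k

end Slabs

section ProductMeasure

lemma exists_nat_measure_prod_inter_le_ne_zero {α β : Type*} [MeasurableSpace α]
    [MeasurableSpace β] {μ : Measure α} [SFinite μ] [NeZero μ] {L : Measure β} [SFinite L]
    {G : Set (α × β)} (hG : MeasurableSet G) (hGpos : ∀ᵐ a ∂μ, L (Prod.mk a ⁻¹' G) ≠ 0)
    {f : α × β → ℝ≥0∞} (hf : Measurable f) (hf_top : ∀ᵐ a ∂μ, ∀ᵐ b ∂L, f (a, b) ≠ ⊤) :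
    ∃ M : ℕ, μ.prod L (G ∩ {z | f z ≤ M}) ≠ 0 := by
  by_contra! h₀
  have hfin : ∀ᵐ z ∂μ.prod L, f z ≠ ⊤ :=
    (Measure.ae_prod_iff_ae_ae (hf (measurableSet_singleton ⊤).compl)).2 hf_top
  have hnull : μ.prod L G = 0 := by
    refine measure_mono_null (fun z hz => ?_) (measure_union_null (measure_iUnion_null h₀) hfin)
    obtain hz_top | hz_top := eq_or_ne (f z) ⊤
    · exact .inr (not_not_intro hz_top)
    · obtain ⟨M, hM⟩ := ENNReal.exists_nat_gt hz_top
      exact .inl (mem_iUnion.2 ⟨M, hz, hM.le⟩)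
  obtain ⟨a, ha, ha₀⟩ := (hGpos.and ((Measure.measure_prod_null hG).1 hnull)).exists
  exact ha ha₀

end ProductMeasure

section Potential

variable {V : Type*} [NormedAddCommGroup V] [InnerProductSpace ℝ V] [FiniteDimensional ℝ V]
  [MeasurableSpace V] [BorelSpace V] {L : Measure V} [L.IsAddHaarMeasure] {μ : Measure (V × ℝ)}
  {t : ℝ}

/-- For `z = (p, x)`, the Riesz `t`-potential at the point `graphMap p x` of the projection of `μ`
to the vertical line over `x` along the hyperplanes. -/
noncomputable def verticalPotential (μ : Measure (V × ℝ)) (t : ℝ) (z : (V × ℝ) × V) : ℝ≥0∞ :=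
  ∫⁻ p, edist (graphMap z.1 z.2) (graphMap p z.2) ^ (-t) ∂μ

lemma measurable_edist_graphMap : Measurable fun w : ((V × ℝ) × V) × (V × ℝ) =>
    edist (graphMap w.1.1 w.1.2) (graphMap w.2 w.1.2) := by
  have h := continuous_graphMap (V := V)
  exact Continuous.measurable (by fun_prop)

lemma measurable_verticalPotential [SFinite μ] : Measurable (verticalPotential μ t) :=
  (measurable_edist_graphMap.pow_const (-t)).lintegral_prod_right'

lemma ae_verticalPotential_ne_top [IsFiniteMeasure μ] {s : ℝ} (hμ : IsFrostman μ s) (ht : 0 < t)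
    (ht₁ : t < 1) (hts : t < s) (p : V × ℝ) : ∀ᵐ x ∂L, verticalPotential μ t (p, x) ≠ ⊤ := by
  have hball (N : ℕ) : ∀ᵐ x ∂L.restrict (closedBall 0 (N + 1)),
      verticalPotential μ t (p, x) ≠ ⊤ := by
    obtain ⟨K, hK, hKq⟩ := exists_setLIntegral_rpow_neg_le L ht ht₁
      (le_add_of_nonneg_left N.cast_nonneg)
    have hkernel : Measurable fun w : V × (V × ℝ) =>
        edist (graphMap p w.1) (graphMap w.2 w.1) ^ (-t) :=
      (measurable_edist_graphMap.comp (f := fun w : V × (V × ℝ) => ((p, w.1), w.2))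
        (by fun_prop)).pow_const _
    refine (ae_lt_top hkernel.lintegral_prod_right' (ne_top_of_le_ne_top
      (mul_ne_top hK (hμ.lintegral_edist_rpow_neg_ne_top ht hts p)) ?_)).mono fun x => ne_of_lt
    calc ∫⁻ x in closedBall 0 (N + 1), ∫⁻ p', edist (graphMap p x) (graphMap p' x) ^ (-t) ∂μ ∂L
        = ∫⁻ p', ∫⁻ x in closedBall 0 (N + 1),
            ‖⟪(p - p').1, x⟫ + (p - p').2‖ₑ ^ (-t) ∂L ∂μ := by
          simp_rw [← edist_graphMap]
          exact lintegral_lintegral_swap hkernel.aemeasurable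
      _ ≤ ∫⁻ p', K * ‖p - p'‖ₑ ^ (-t) ∂μ := lintegral_mono fun p' => hKq (p - p')
      _ = K * ∫⁻ p', edist p p' ^ (-t) ∂μ := by
          simp_rw [edist_eq_enorm_sub]
          exact lintegral_const_mul _ (by fun_prop)
  have hcover : ⋃ N : ℕ, closedBall (0 : V) (N + 1) = univ :=
    univ_subset_iff.1 <| (iUnion_closedBall_nat (0 : V)).ge.trans <|
      iUnion_mono fun N => closedBall_subset_closedBall (by linarith)
  rw [← Measure.restrict_univ (μ := L), ← hcover]
  exact (ae_restrict_iUnion_iff _ _).2 hball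

lemma measure_le_of_verticalPotential_le (ht : 0 ≤ t) {M : ℝ≥0} {r : ℝ≥0∞} (hr : r ≠ ⊤) {x : V}
    {T : Set (V × ℝ)} (hpot : ∀ p ∈ T, verticalPotential μ t (p, x) ≤ M)
    (hT : ∀ p ∈ T, ∀ p' ∈ T, edist (graphMap p x) (graphMap p' x) ≤ r) : μ T ≤ M * r ^ t := by
  obtain rfl | ⟨p, hp⟩ := T.eq_empty_or_nonempty
  · simp
  · exact measure_le_mul_rpow_of_lintegral_rpow_neg_le
      (measurable_edist_graphMap.comp measurable_prodMk_left) ht hr (hpot p hp) (hT p hp)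

lemma isFrostman_map_graphMap [SFinite μ] (ht : 0 ≤ t) {G : Set ((V × ℝ) × V)}
    (hG : MeasurableSet G) {M : ℝ≥0} (hpot : ∀ z ∈ G, verticalPotential μ t z ≤ M) :
    IsFrostman (((μ.prod L).restrict G).map fun z => graphMap z.1 z.2) (t + finrank ℝ V) := by
  obtain ⟨C, hC, hLC⟩ := isFrostman_addHaar L
  refine ⟨M * C, by finiteness, fun U hU => ?_⟩
  have hcl : MeasurableSet ((fun z : (V × ℝ) × V => graphMap z.1 z.2) ⁻¹' closure U) :=
    continuous_graphMap.measurable measurableSet_closure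
  have hdiam {q q' : V × ℝ} (hq : q ∈ closure U) (hq' : q' ∈ closure U) :
      edist q q' ≤ ediam U :=
    (edist_le_ediam_of_mem hq hq').trans_eq (ediam_closure U)
  have hslice (x : V) : μ ((·, x) ⁻¹' ((fun z => graphMap z.1 z.2) ⁻¹' closure U ∩ G)) ≤
      (Prod.fst '' closure U).indicator (fun _ => M * ediam U ^ t) x := by
    by_cases hx : x ∈ Prod.fst '' closure U
    · rw [indicator_of_mem hx]
      exact measure_le_of_verticalPotential_le ht hU (fun p hp => hpot _ hp.2)
        fun p hp p' hp' => hdiam hp.1 hp'.1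
    · rw [indicator_of_notMem hx]
      exact (measure_mono fun p hp => hx ⟨_, hp.1, rfl⟩).trans_eq measure_empty
  have hproj : ediam (Prod.fst '' closure U) ≤ ediam U :=
    ediam_image_le_iff.2 fun q hq q' hq' => (le_max_left _ _).trans (hdiam hq hq')
  calc ((μ.prod L).restrict G).map (fun z => graphMap z.1 z.2) U
      ≤ ((μ.prod L).restrict G).map (fun z => graphMap z.1 z.2) (closure U) :=
        measure_mono subset_closure
    _ = ∫⁻ x, μ ((·, x) ⁻¹' ((fun z => graphMap z.1 z.2) ⁻¹' closure U ∩ G)) ∂L := by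
        rw [Measure.map_apply continuous_graphMap.measurable measurableSet_closure,
          Measure.restrict_apply hcl, Measure.prod_apply_symm (hcl.inter hG)]
    _ ≤ M * ediam U ^ t * L (Prod.fst '' closure U) :=
        (lintegral_mono hslice).trans (lintegral_indicator_const_le _ _)
    _ ≤ M * ediam U ^ t * (C * ediam U ^ (finrank ℝ V : ℝ)) := by
        gcongr
        exact (hLC _ (ne_top_of_le_ne_top hU hproj)).trans (by gcongr)
    _ = M * C * ediam U ^ (t + finrank ℝ V) := by
        rw [ENNReal.rpow_add_of_nonneg _ _ ht (by positivity)]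
        ring

lemma hausdorffMeasure_biUnion_affineGraph_inter_ne_zero [IsFiniteMeasure μ] [NeZero μ] {s : ℝ}
    (hμ : IsFrostman μ s) (ht : 0 < t) (ht₁ : t < 1) (hts : t < s) {E A : Set (V × ℝ)}
    (hμE : ∀ᵐ p ∂μ, p ∈ E) (hA : MeasurableSet A)
    (hpos : ∀ p ∈ E, μH[finrank ℝ V] (affineGraph p ∩ A) ≠ 0) :
    μH[t + finrank ℝ V] ((⋃ p ∈ E, affineGraph p) ∩ A) ≠ 0 := by
  let L : Measure V := μH[finrank ℝ V]
  have hΦ : Measurable fun z : (V × ℝ) × V => graphMap z.1 z.2 := continuous_graphMap.measurable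
  obtain ⟨M, hM⟩ := exists_nat_measure_prod_inter_le_ne_zero (μ := μ) (L := L) (hΦ hA)
    (hμE.mono fun p hp =>
      hausdorffMeasure_preimage_graphMap_ne_zero (Nat.cast_nonneg _) (hpos p hp))
    measurable_verticalPotential (.of_forall (ae_verticalPotential_ne_top hμ ht ht₁ hts))
  have hFrostman := isFrostman_map_graphMap (L := L) (μ := μ) (M := M) ht.le
    ((hΦ hA).inter (measurable_verticalPotential measurableSet_Iic)) fun z hz => hz.2
  refine hFrostman.hausdorffMeasure_ne_zero fun h₀ => hM ?_
  have hE : ∀ᵐ z ∂μ.prod L, z.1 ∈ E := Measure.quasiMeasurePreserving_fst.ae hμE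
  have hnull := le_zero_iff.1 <| (Measure.le_restrict_apply _ _).trans <|
    (Measure.le_map_apply hΦ.aemeasurable _).trans h₀.le
  refine measure_mono_null (fun z hz => ?_) (measure_union_null hnull hE)
  by_cases hzE : z.1 ∈ E
  · exact .inl ⟨⟨mem_biUnion hzE rfl, hz.1⟩, hz⟩
  · exact .inr hzE

end Potential

section Dimension

variable {V : Type*} [NormedAddCommGroup V] [InnerProductSpace ℝ V] [FiniteDimensional ℝ V]
  [MeasurableSpace V] [BorelSpace V] {E A : Set (V × ℝ)}

lemma le_dimH_biUnion_affineGraph_inter (hE : AnalyticSet E) (hEne : E.Nonempty)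
    (hA : MeasurableSet A)
    (hpos : ∀ p ∈ E, μH[finrank ℝ V] (affineGraph p ∩ A) ≠ 0) :
    min (dimH E + finrank ℝ V) (finrank ℝ V + 1) ≤ dimH ((⋃ p ∈ E, affineGraph p) ∩ A) := by
  set Z := (⋃ p ∈ E, affineGraph p) ∩ A
  have hfinrank : (finrank ℝ V : ℝ≥0∞) ≤ dimH Z := by
    obtain ⟨p, hp⟩ := hEne
    refine le_dimH_of_hausdorffMeasure_ne_zero (d := finrank ℝ V) fun h₀ => hpos p hp ?_
    exact measure_mono_null (inter_subset_inter_left A (subset_biUnion_of_mem hp)) h₀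
  suffices hmin : min (dimH E) 1 ≤ dimH Z - finrank ℝ V by
    rw [add_comm _ (1 : ℝ≥0∞), min_add_add_right]
    exact (add_le_add_left hmin _).trans_eq (tsub_add_cancel_of_le hfinrank)
  refine ENNReal.le_of_forall_nnreal_lt fun t ht => ?_
  obtain rfl | ht₀ := eq_zero_or_pos t
  · exact zero_le
  obtain ⟨s, hts, hsE⟩ := ENNReal.lt_iff_exists_nnreal_btwn.1 (ht.trans_le (min_le_left _ _))
  have hts' : t < s := by exact_mod_cast hts
  have ht₁ : t < 1 := by exact_mod_cast ht.trans_le (min_le_right _ _)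
  obtain ⟨μ, hμE, hμ⟩ := exists_isFrostman hE (ht₀.trans hts') hsE
  refine ENNReal.le_sub_of_add_le_right (by finiteness) ?_
  exact_mod_cast le_dimH_of_hausdorffMeasure_ne_zero (d := t + finrank ℝ V) <| by
    exact_mod_cast hausdorffMeasure_biUnion_affineGraph_inter_ne_zero hμ (t := t)
      (by exact_mod_cast ht₀) (by exact_mod_cast ht₁) (by exact_mod_cast hts') hμE hA hpos

theorem dimH_hyperplaneUnion_inter_general (hE : AnalyticSet E) (hEne : E.Nonempty)
    (hA : MeasurableSet A)
    (hpos : ∀ p ∈ E, 0 < μH[finrank ℝ V] (affineGraph p ∩ A)) :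
    dimH ((⋃ p ∈ E, affineGraph p) ∩ A) = dimH (⋃ p ∈ E, affineGraph p) ∧
      dimH (⋃ p ∈ E, affineGraph p) = min (dimH E + finrank ℝ V) (finrank ℝ V + 1) := by
  have hupper := dimH_biUnion_affineGraph_le E
  have hlower := le_dimH_biUnion_affineGraph_inter hE hEne hA fun p hp => (hpos p hp).ne'
  have hmono : dimH ((⋃ p ∈ E, affineGraph p) ∩ A) ≤ dimH (⋃ p ∈ E, affineGraph p) :=
    dimH_mono inter_subset_left
  exact ⟨hmono.antisymm (hupper.trans hlower), hupper.antisymm (hlower.trans hmono)⟩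

end Dimension

end

/-- **Dimension of a union of positive-measure pieces of hyperplanes.** Let `E ⊆ ℝⁿ` be a
non-empty Borel set and `A ⊆ ℝⁿ` a Borel set intersecting each hyperplane `L(p)`, `p ∈ E`,
in a set of positive `(n−1)`-dimensional measure. Then
`dim_H (L(E) ∩ A) = dim_H L(E) = min {dim_H E + n − 1, n}`. -/
theorem dimH_hyperplaneUnion_inter (n : ℕ) (hn : 2 ≤ n)
    (E : Set (EuclideanSpace ℝ (Fin (n - 1)) × ℝ)) (hE : MeasurableSet E)
    (hEne : E.Nonempty)
    (A : Set (EuclideanSpace ℝ (Fin (n - 1)) × ℝ)) (hA : MeasurableSet A)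
    (hpos : ∀ p ∈ E, 0 < μH[(n : ℝ) - 1] (hyperplane p ∩ A)) :
    dimH (hyperplaneUnion E ∩ A) = dimH (hyperplaneUnion E) ∧
      dimH (hyperplaneUnion E) = min (dimH E + ((n - 1 : ℕ) : ENNReal)) (n : ENNReal) := by
  obtain ⟨m, rfl⟩ := Nat.exists_eq_add_of_le' (one_le_two.trans hn)
  have hdim : ((m + 1 : ℕ) : ℝ) - 1 =
      Module.finrank ℝ (EuclideanSpace ℝ (Fin (m + 1 - 1))) := by simp
  rw [hdim] at hpos
  obtain ⟨hinter, hunion⟩ := dimH_hyperplaneUnion_inter_general hE.analyticSet hEne hA hpos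
  refine ⟨hinter, hunion.trans ?_⟩
  simp
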